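/- Let n₁ and n₂ be positive integers and let f = (f₁,f₂) ∈ 𝒪(ℂ²,0,0) be given by f₁(x₁,x₂) = x₁^{n₁}·O(1) + x₂^{n₂}·O(1) and f₂(x₁,x₂) = x₁^{n₁}·O(1) + x₂^{n₂}·O(1). If 0 is an isolated zero of f, then π_f(0) ≥ n₁n₂. -/

import Mathlib

open Metric Set Filter Topology Polynomial Asymptotics
open scoped Classical

noncomputable section

namespace ZhangPaper

/-- `ℂⁿ`. -/
abbrev Cn (n : ℕ) := Fin n → ℂ

variable {n : ℕ}

/-- A germ in `𝒪(ℂⁿ,0,0)`: holomorphic near `0` and fixing the origin. -/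
def IsGerm (f : Cn n → Cn n) : Prop := AnalyticAt ℂ f 0 ∧ f 0 = 0

/-- `q` is a regular value of `h` on `s`. -/
def IsRegularValueOn (h : Cn n → Cn n) (s : Set (Cn n)) (q : Cn n) : Prop :=
  ∀ x ∈ s, h x = q → Function.Bijective (fderiv ℂ h x)

/-- `m` is the zero order (multiplicity) of `h` at the isolated zero `p`:
the number of solutions of `h x = q` near `p`, for any regular value `q`
with `‖q‖` sufficiently small. -/
def HasZeroOrder (h : Cn n → Cn n) (p : Cn n) (m : ℕ) : Prop :=
  ∃ r > 0, AnalyticOnNhd ℂ h (closedBall p r) ∧ h p = 0 ∧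
    (∀ x ∈ closedBall p r, h x = 0 → x = p) ∧
    (∀ ε > 0, ∃ q : Cn n, ‖q‖ < ε ∧ IsRegularValueOn h (ball p r) q) ∧
    ∃ δ > 0, ∀ q : Cn n, ‖q‖ < δ → IsRegularValueOn h (ball p r) q →
      {x ∈ ball p r | h x = q}.ncard = m

/-- The zero order `π_h(p)` of `h` at `p`. -/
def zeroOrder (h : Cn n → Cn n) (p : Cn n) : ℕ := sInf {m | HasZeroOrder h p m}

/-- The fixed point index `μ_g(p)` of `g` at `p`. -/
def fixedPointIndex (g : Cn n → Cn n) (p : Cn n) : ℕ :=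
  zeroOrder (fun x => x - g x) p

/-- The local Dold index `P_M(f,0)`. -/
def doldIndex (f : Cn n → Cn n) (M : ℕ) : ℤ :=
  ∑ τ ∈ M.primeFactors.powerset,
    (-1 : ℤ) ^ τ.card * (fixedPointIndex (f^[M / (∏ p ∈ τ, p)]) 0 : ℤ)

/-- `x` is a periodic point of exact period `M` for `g`. -/
def ExactPeriodicPt (g : Cn n → Cn n) (M : ℕ) (x : Cn n) : Prop :=
  g^[M] x = x ∧ ∀ j, 0 < j → j < M → g^[j] x ≠ x

/-- `g` has at least `m` distinct periodic orbits of period `M` inside `B`. -/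
def AtLeastOrbits (g : Cn n → Cn n) (M m : ℕ) (B : Set (Cn n)) : Prop :=
  ∃ p : Fin m → Cn n,
    (∀ i, ExactPeriodicPt g M (p i) ∧ ∀ j < M, g^[j] (p i) ∈ B) ∧
    ∀ i j : Fin m, i ≠ j → ∀ l < M, g^[l] (p i) ≠ p j

/-- `g` has exactly `m` distinct periodic orbits of period `M` inside `B`. -/
def ExactlyOrbits (g : Cn n → Cn n) (M m : ℕ) (B : Set (Cn n)) : Prop :=
  AtLeastOrbits g M m B ∧ ¬ AtLeastOrbits g M (m + 1) B

/-- The number `𝒪_M(f,0)` of periodic orbits of period `M` of `f` hidden at the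
fixed point `0`: the largest `m` such that there is a ball `B` centered at `0` in which
`0` is the only fixed point of `f^M`, and a sequence of holomorphic maps fixing `0`
converging to `f` uniformly on `B`, each having `m` distinct periodic orbits of
period `M` in `B`. -/
def hiddenOrbits (f : Cn n → Cn n) (M : ℕ) : ℕ :=
  sSup {m | ∃ r > 0,
    (∀ x ∈ closedBall (0 : Cn n) r, f^[M] x = x → x = 0) ∧
    ∃ fk : ℕ → Cn n → Cn n,
      (∀ k, AnalyticOnNhd ℂ (fk k) (ball (0 : Cn n) r) ∧ fk k 0 = 0) ∧
      TendstoUniformlyOn fk f atTop (ball (0 : Cn n) r) ∧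
      ∀ k, AtLeastOrbits (fk k) M m (ball (0 : Cn n) r)}

/-- `0` is an isolated fixed point of `g`. -/
def IsolatedFixedPtAt0 (g : Cn n → Cn n) : Prop :=
  g 0 = 0 ∧ ∀ᶠ x in 𝓝[≠] (0 : Cn n), g x ≠ x

/-- `0` is an isolated zero of `h`. -/
def IsolatedZeroAt0 (h : Cn n → Cn n) : Prop :=
  h 0 = 0 ∧ ∀ᶠ x in 𝓝[≠] (0 : Cn n), h x ≠ 0

/-- `p` is a simple fixed point of `g`: `Dg(p)` has no eigenvalue `1`. -/
def SimpleFixedPt (g : Cn n → Cn n) (p : Cn n) : Prop :=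
  g p = p ∧ ¬ Module.End.HasEigenvalue ((fderiv ℂ g p).toLinearMap) 1

/-- The global fixed point index `L(g)` of `g` over `U`: the sum of the fixed point
indices at all fixed points of `g` in `U`. -/
def globalIndex (g : Cn n → Cn n) (U : Set (Cn n)) : ℤ :=
  ∑ᶠ p ∈ {x ∈ U | g x = x}, (fixedPointIndex g p : ℤ)

/-- The global Dold index `P_M(f)` over `U`. -/
def globalDold (f : Cn n → Cn n) (M : ℕ) (U : Set (Cn n)) : ℤ :=
  ∑ τ ∈ M.primeFactors.powerset,
    (-1 : ℤ) ^ τ.card * globalIndex (f^[M / (∏ p ∈ τ, p)]) U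

/-!
Write `f x = A x · (x₁ ^ n₁, x₂ ^ n₂)`. For small generic `a` and `s` the nearby map
`g x = (A x + a) · (x₁ ^ n₁ - s, x₂ ^ n₂ - s)` has `n₁ n₂` simple zeros near `0`, namely the points
with `x₁ ^ n₁ = x₂ ^ n₂ = s`, so it is enough that solutions of `f x = q` and simple zeros of `g`
are compared by a Rouché theorem. If `η` is a bump function supported near `0`, the integral of
`η (f x) · det Df(x)` over the domain is unchanged by a homotopy of `f` along which no boundary
point enters the support of `η`. The real Jacobian of a holomorphic map is `|det|² ≥ 0`, so this
integral counts the simple zeros of `f` when `0` is a regular value, and it bounds the number of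
simple zeros from above in general.
-/

section Determinants

variable {ι : Type*} [Fintype ι] [DecidableEq ι]

theorem det_updateRow_updateRow_swap {R : Type*} [CommRing R] (M : Matrix ι ι R) {i k : ι}
    (hik : i ≠ k) (u w : ι → R) :
    ((M.updateRow i u).updateRow k w).det = -((M.updateRow i w).updateRow k u).det := by
  have swapped : (M.updateRow i u).updateRow k w =
      ((M.updateRow i w).updateRow k u).submatrix (Equiv.swap i k) id := by
    ext l m
    by_cases hi : l = i <;> by_cases hk : l = k <;>
      simp_all [Matrix.updateRow_apply, Equiv.swap_apply_of_ne_of_ne]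
  rw [swapped, Matrix.det_permute, Equiv.Perm.sign_swap hik]
  simp only [Units.val_neg, Units.val_one, Int.cast_neg, Int.cast_one, neg_one_mul]

theorem linearMap_apply_eq_sum_mul_single {R : Type*} [CommRing R] (L : (ι → R) →ₗ[R] R)
    (a : ι → R) : L a = ∑ k, a k * L (Pi.single k 1) := by
  conv_lhs => rw [← Finset.univ_sum_single a, map_sum]
  refine Finset.sum_congr rfl fun k _ => ?_
  rw [← smul_eq_mul, ← map_smul, ← Pi.single_smul, smul_eq_mul, mul_one]

theorem det_updateRow_eq_sum_single {R : Type*} [CommRing R] (M : Matrix ι ι R) (k : ι)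
    (b : ι → R) :
    (M.updateRow k b).det = ∑ l, b l * (M.updateRow k (Pi.single l 1)).det := by
  simp_rw [← Matrix.cramer_transpose_apply]
  exact linearMap_apply_eq_sum_mul_single (.proj k ∘ₗ Matrix.cramer M.transpose) b

theorem sum_adjugate_updateRow_eq_zero {R : Type*} [CommRing R] [NoZeroDivisors R] [CharZero R]
    (M : Matrix ι ι R) {i k : ι} (hki : k ≠ i) {B : Matrix ι ι R} (hB : B.IsSymm) :
    ∑ j, (M.updateRow k (B j)).adjugate j i = 0 := by
  let a (j l : ι) : R := ((M.updateRow i (Pi.single j 1)).updateRow k (Pi.single l 1)).det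
  have antisymm (j l : ι) : a j l = -a l j := det_updateRow_updateRow_swap M hki.symm _ _
  have expand : ∑ j, (M.updateRow k (B j)).adjugate j i = ∑ j, ∑ l, B j l * a j l := by
    refine Finset.sum_congr rfl fun j _ => ?_
    rw [Matrix.adjugate_apply, Matrix.updateRow_comm _ hki, det_updateRow_eq_sum_single]
  have neg_self : ∑ j, ∑ l, B j l * a j l = -∑ j, ∑ l, B j l * a j l := calc
    _ = ∑ l, ∑ j, B j l * a j l := Finset.sum_comm
    _ = -∑ l, ∑ j, B l j * a l j := by
      simp only [← Finset.sum_neg_distrib]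
      refine Finset.sum_congr rfl fun l _ => Finset.sum_congr rfl fun j _ => ?_
      rw [hB.apply, antisymm, mul_neg]
  rw [expand]
  exact self_eq_neg.1 neg_self

theorem contDiffAt_matrix_det {𝕜 E : Type*} [NontriviallyNormedField 𝕜] [NormedAddCommGroup E]
    [NormedSpace 𝕜 E] {M : E → Matrix ι ι 𝕜} {x : E} {m : WithTop ℕ∞}
    (hM : ∀ i j, ContDiffAt 𝕜 m (fun y => M y i j) x) :
    ContDiffAt 𝕜 m (fun y => (M y).det) x := by
  simp only [Matrix.det_apply]
  exact ContDiffAt.sum fun σ _ => (contDiffAt_prod fun i _ => hM _ _).const_smul _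

theorem fderiv_matrix_det {𝕜 E : Type*} [NontriviallyNormedField 𝕜] [NormedAddCommGroup E]
    [NormedSpace 𝕜 E] {M : E → Matrix ι ι 𝕜} {x : E}
    (hM : ∀ i j, DifferentiableAt 𝕜 (fun y => M y i j) x) (w : E) :
    fderiv 𝕜 (fun y => (M y).det) x w =
      ∑ k, ((M x).updateRow k fun l => fderiv 𝕜 (fun y => M y k l) x w).det := by
  let D : ContinuousMultilinearMap 𝕜 (fun _ : ι => ι → 𝕜) 𝕜 :=
    { Matrix.detRowAlternating.toMultilinearMap with cont := continuous_id.matrix_det }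
  have h := HasFDerivAt.multilinear_comp (f := D) (g := fun k y => M y k)
    fun k => hasFDerivAt_pi.2 fun l => (hM k l).hasFDerivAt
  change fderiv 𝕜 (fun y => D (M y)) x w = _
  rw [h.fderiv]
  simp only [_root_.sum_apply, ContinuousLinearMap.comp_apply]
  rfl

end Determinants

section ExactForms

open MeasureTheory

theorem indicator_eventuallyEq_zero {X : Type*} [TopologicalSpace X] {Ω : Set X} (hΩ : IsOpen Ω)
    {u : X → ℝ} (hu : ∀ x ∈ frontier Ω, u =ᶠ[𝓝 x] 0) {x : X} (hx : x ∉ Ω) :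
    Ω.indicator u =ᶠ[𝓝 x] 0 := by
  by_cases hx' : x ∈ closure Ω
  · filter_upwards [hu x ⟨hx', by rwa [hΩ.interior_eq]⟩] with y hy
    exact indicator_apply_eq_zero.2 fun _ => hy
  · filter_upwards [isClosed_closure.isOpen_compl.eventually_mem hx'] with y hy
    exact indicator_of_notMem (fun h => hy (subset_closure h)) _

theorem integrable_mul_of_continuousAt_tsupport {E : Type*} [TopologicalSpace E]
    [MeasurableSpace E] [OpensMeasurableSpace E] (μ : Measure E) [IsFiniteMeasureOnCompacts μ]
    {u g : E → ℝ} (hu : Continuous u) (hc : HasCompactSupport u)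
    (hg : ∀ x ∈ tsupport u, ContinuousAt g x) : Integrable (fun x => u x * g x) μ :=
  (continuous_of_tsupport fun x hx =>
    hu.continuousAt.mul (hg x (tsupport_mul_subset_left hx))).integrable_of_hasCompactSupport
      hc.mul_right

variable {ι : Type*} {E : Type*} [NormedAddCommGroup E] [NormedSpace ℝ E]

/-- The matrix of directional derivatives of the components `F i` along the vectors `v j`; the
Jacobi matrix of `F` when `v` is a basis. -/
def jacobiMatrix (v : ι → E) (F : ι → E → ℝ) (x : E) : Matrix ι ι ℝ :=
  Matrix.of fun i j => fderiv ℝ (F i) x (v j)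

theorem contDiffAt_jacobiMatrix_apply (v : ι → E) {F : ι → E → ℝ} {k : ι} {x : E}
    {m : WithTop ℕ∞} (hF : ContDiffAt ℝ (m + 1) (F k) x) (l : ι) :
    ContDiffAt ℝ m (fun y => jacobiMatrix v F y k l) x :=
  (hF.fderiv_right le_rfl).clm_apply contDiffAt_const

theorem jacobiMatrix_add_smul (v : ι → E) {f g : ι → E → ℝ} {x : E}
    (hf : ∀ k, DifferentiableAt ℝ (f k) x) (hg : ∀ k, DifferentiableAt ℝ (g k) x) (t : ℝ) :
    jacobiMatrix v (f + t • g) x = jacobiMatrix v f x + t • jacobiMatrix v g x := by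
  ext i j
  simp only [jacobiMatrix, Matrix.of_apply, Matrix.add_apply, Matrix.smul_apply, Pi.add_apply,
    Pi.smul_apply, fderiv_add (hf i) ((hg i).const_smul t), fderiv_const_smul (hg i),
    _root_.add_apply, _root_.smul_apply]

theorem continuousOn_jacobiMatrix (v : ι → E) {f : ι → E → ℝ} {s : Set E}
    (hf : ∀ k, ∀ x ∈ s, ContDiffAt ℝ 1 (f k) x) : ContinuousOn (jacobiMatrix v f) s :=
  fun x hx => (continuousAt_pi.2 fun k => continuousAt_pi.2 fun l =>
    (contDiffAt_jacobiMatrix_apply v (m := 0)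
      ((hf k x hx).of_le (by norm_num)) l).continuousAt).continuousWithinAt

theorem isSymm_fderiv_fderiv (v : ι → E) {u : E → ℝ} {x : E} (hu : ContDiffAt ℝ 2 u x) :
    (Matrix.of fun j l => fderiv ℝ (fun y => fderiv ℝ u y (v l)) x (v j)).IsSymm := by
  have hd : DifferentiableAt ℝ (fderiv ℝ u) x :=
    (hu.fderiv_right (m := 1) (by norm_num)).differentiableAt one_ne_zero
  ext j l
  simp only [Matrix.transpose_apply, Matrix.of_apply,
    fderiv_clm_apply hd (differentiableAt_const _), fderiv_fun_const]
  simpa using hu.isSymmSndFDerivAt (by simp) (v l) (v j)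

variable [Fintype ι] [DecidableEq ι]

/-- The **Piola identity**. -/
theorem sum_fderiv_adjugate_jacobiMatrix_eq_zero (v : ι → E) {F : ι → E → ℝ} {i : ι} {x : E}
    (hF : ∀ k ≠ i, ContDiffAt ℝ 2 (F k) x) :
    ∑ j, fderiv ℝ (fun y => (jacobiMatrix v F y).adjugate j i) x (v j) = 0 := by
  let H (k : ι) : Matrix ι ι ℝ :=
    Matrix.of fun j l => fderiv ℝ (fun y => fderiv ℝ (F k) y (v l)) x (v j)
  have diff (j k l : ι) : DifferentiableAt ℝ
      (fun y => (jacobiMatrix v F y).updateRow i (Pi.single j 1) k l) x := by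
    obtain rfl | hk := eq_or_ne k i
    · simp only [Matrix.updateRow_self, differentiableAt_const]
    · simp only [Matrix.updateRow_ne hk]
      exact (contDiffAt_jacobiMatrix_apply v (m := 1) (hF k hk) l).differentiableAt one_ne_zero
  have expand (j : ι) : fderiv ℝ (fun y => (jacobiMatrix v F y).adjugate j i) x (v j) =
      ∑ k ∈ Finset.univ.erase i, ((jacobiMatrix v F x).updateRow k (H k j)).adjugate j i := by
    simp only [Matrix.adjugate_apply]
    rw [fderiv_matrix_det (diff j), ← Finset.add_sum_erase _ _ (Finset.mem_univ i)]
    simp only [Matrix.updateRow_self, fderiv_fun_const]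
    rw [Matrix.det_eq_zero_of_row_eq_zero i fun l => by simp, zero_add]
    refine Finset.sum_congr rfl fun k hk => ?_
    have hki := Finset.ne_of_mem_erase hk
    simp only [Matrix.updateRow_ne hki, Matrix.updateRow_comm _ hki]
    rfl
  simp_rw [expand]
  rw [Finset.sum_comm]
  refine Finset.sum_eq_zero fun k hk => ?_
  have hki := Finset.ne_of_mem_erase hk
  exact sum_adjugate_updateRow_eq_zero _ hki (isSymm_fderiv_fderiv v (hF k hki))

theorem contDiffAt_adjugate_jacobiMatrix_apply (v : ι → E) {F : ι → E → ℝ} {i : ι} {x : E}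
    (hF : ∀ k ≠ i, ContDiffAt ℝ 2 (F k) x) (j : ι) :
    ContDiffAt ℝ 1 (fun y => (jacobiMatrix v F y).adjugate j i) x := by
  simp only [Matrix.adjugate_apply]
  refine contDiffAt_matrix_det fun k l => ?_
  obtain rfl | hk := eq_or_ne k i
  · simp only [Matrix.updateRow_self]
    exact contDiffAt_const
  · simp only [Matrix.updateRow_ne hk]
    exact contDiffAt_jacobiMatrix_apply v (hF k hk) l

variable [FiniteDimensional ℝ E] [MeasurableSpace E] [BorelSpace E]
  (μ : Measure E) [μ.IsAddHaarMeasure]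

/-- The form `dF₁ ∧ ⋯ ∧ dFₙ` has the compactly supported primitive `± Fᵢ dF₁ ∧ ⋯ ∧ dFₙ` with `dFᵢ`
omitted. -/
theorem integral_det_jacobiMatrix_eq_zero (v : ι → E) {F : ι → E → ℝ} {i : ι}
    (hi : ContDiff ℝ 1 (F i)) (hc : HasCompactSupport (F i))
    (hF : ∀ k ≠ i, ∀ x ∈ tsupport (F i), ContDiffAt ℝ 2 (F k) x) :
    ∫ x, (jacobiMatrix v F x).det ∂μ = 0 := by
  let C (j : ι) (x : E) : ℝ := (jacobiMatrix v F x).adjugate j i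
  have hC (j : ι) (x : E) (hx : x ∈ tsupport (F i)) : ContDiffAt ℝ 1 (C j) x :=
    contDiffAt_adjugate_jacobiMatrix_apply v (fun k hk => hF k hk x hx) j
  have intF' (j : ι) : Integrable (fun x => fderiv ℝ (F i) x (v j) * C j x) μ :=
    integrable_mul_of_continuousAt_tsupport μ
      ((hi.continuous_fderiv one_ne_zero).clm_apply continuous_const) (hc.fderiv_apply ℝ (v j))
      fun x hx => (hC j x (tsupport_fderiv_apply_subset ℝ (v j) hx)).continuousAt
  have intC' (j : ι) : Integrable (fun x => F i x * fderiv ℝ (C j) x (v j)) μ :=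
    integrable_mul_of_continuousAt_tsupport μ hi.continuous hc fun x hx =>
      ((hC j x hx).continuousAt_fderiv one_ne_zero).clm_apply continuousAt_const
  have by_parts (j : ι) : ∫ x, fderiv ℝ (F i) x (v j) * C j x ∂μ =
      -∫ x, F i x * fderiv ℝ (C j) x (v j) ∂μ := by
    rw [integral_mul_fderiv_eq_neg_fderiv_mul_of_integrable (intF' j) (intC' j), neg_neg]
    · exact integrable_mul_of_continuousAt_tsupport μ hi.continuous hc fun x hx =>
        (hC j x hx).continuousAt
    · exact fun x _ => hi.differentiable one_ne_zero x
    · exact fun x hx => (hC j x hx).differentiableAt one_ne_zero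
  have piola (x : E) : ∑ j, F i x * fderiv ℝ (C j) x (v j) = 0 := by
    by_cases hx : x ∈ tsupport (F i)
    · rw [← Finset.mul_sum,
        sum_fderiv_adjugate_jacobiMatrix_eq_zero v fun k hk => hF k hk x hx, mul_zero]
    · simp only [image_eq_zero_of_notMem_tsupport hx, zero_mul, Finset.sum_const_zero]
  calc ∫ x, (jacobiMatrix v F x).det ∂μ
      = ∫ x, ∑ j, fderiv ℝ (F i) x (v j) * C j x ∂μ := by
        simp only [Matrix.det_eq_sum_mul_adjugate_row _ i]
        rfl
    _ = -∫ x, ∑ j, F i x * fderiv ℝ (C j) x (v j) ∂μ := by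
        rw [integral_finsetSum _ fun j _ => intF' j, integral_finsetSum _ fun j _ => intC' j,
          ← Finset.sum_neg_distrib]
        exact Finset.sum_congr rfl fun j _ => by_parts j
    _ = 0 := by simp only [piola, integral_zero, neg_zero]

theorem setIntegral_det_jacobiMatrix_eq_zero (v : ι → E) {F : ι → E → ℝ} {i : ι} {Ω : Set E}
    (hΩ : IsOpen Ω) (hΩb : Bornology.IsBounded Ω) (hi : ∀ x ∈ Ω, ContDiffAt ℝ 1 (F i) x)
    (hi0 : ∀ x ∈ frontier Ω, F i =ᶠ[𝓝 x] 0)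
    (hF : ∀ k ≠ i, ∀ x ∈ closure Ω, ContDiffAt ℝ 2 (F k) x) :
    ∫ x in Ω, (jacobiMatrix v F x).det ∂μ = 0 := by
  have inside {x : E} (hx : x ∈ Ω) : Ω.indicator (F i) =ᶠ[𝓝 x] F i :=
    (hΩ.eventually_mem hx).mono fun y hy => indicator_of_mem hy _
  have outside {x : E} (hx : x ∉ Ω) : Ω.indicator (F i) =ᶠ[𝓝 x] 0 :=
    indicator_eventuallyEq_zero hΩ hi0 hx
  set G : ι → E → ℝ := Function.update F i (Ω.indicator (F i))
  have hGi : G i = Ω.indicator (F i) := Function.update_self ..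
  have hGk {k : ι} (hk : k ≠ i) : G k = F k := Function.update_of_ne hk ..
  have supp : tsupport (G i) ⊆ closure Ω := by
    rw [hGi]
    exact closure_mono support_indicator_subset
  have G_smooth : ContDiff ℝ 1 (G i) := contDiff_iff_contDiffAt.2 fun x => by
    rw [hGi]
    by_cases hx : x ∈ Ω
    · exact (hi x hx).congr_of_eventuallyEq (inside hx)
    · exact contDiffAt_const.congr_of_eventuallyEq (outside hx)
  have det_eq : Ω.indicator (fun x => (jacobiMatrix v F x).det) =
      fun x => (jacobiMatrix v G x).det := by
    ext x
    by_cases hx : x ∈ Ω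
    · rw [indicator_of_mem hx]
      congr 1
      ext k j
      obtain rfl | hk := eq_or_ne k i
      · simp only [jacobiMatrix, Matrix.of_apply, hGi, (inside hx).fderiv_eq]
      · simp only [jacobiMatrix, Matrix.of_apply, hGk hk]
    · rw [indicator_of_notMem hx, Matrix.det_eq_zero_of_row_eq_zero i fun j => ?_]
      simp only [jacobiMatrix, Matrix.of_apply, hGi, (outside hx).fderiv_eq]
      simp
  rw [← integral_indicator hΩ.measurableSet, det_eq]
  refine integral_det_jacobiMatrix_eq_zero μ v G_smooth
    (hΩb.isCompact_closure.of_isClosed_subset isClosed_closure supp) fun k hk x hx => ?_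
  rw [hGk hk]
  exact hF k hk x (supp hx)

end ExactForms

section Homotopy

open MeasureTheory

variable {ι : Type*} [Fintype ι] [DecidableEq ι]

/-- The `t`-derivative of `φ (a + t • c) * (A + t • B).det`, the density of the pull-back of
`φ dy₁ ∧ ⋯ ∧ dyₙ` under an affine homotopy that has value `a + t • c` and Jacobi matrix `A + t • B`
at the point considered. -/
def homotopyDerivative (φ : (ι → ℝ) → ℝ) (a c : ι → ℝ) (A B : Matrix ι ι ℝ) (t : ℝ) : ℝ :=
  fderiv ℝ φ (a + t • c) c * (A + t • B).det +
    φ (a + t • c) * ∑ i, ((A + t • B).updateRow i (B i)).det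

theorem hasDerivAt_mul_det {φ : (ι → ℝ) → ℝ} (hφ : Differentiable ℝ φ) (a c : ι → ℝ)
    (A B : Matrix ι ι ℝ) (t : ℝ) :
    HasDerivAt (fun s : ℝ => φ (a + s • c) * (A + s • B).det)
      (homotopyDerivative φ a c A B t) t := by
  have line : HasDerivAt (fun s : ℝ => a + s • c) c t := by
    simpa using ((hasDerivAt_id t).smul_const c).const_add a
  have entry (i j : ι) : HasDerivAt (fun s : ℝ => (A + s • B) i j) (B i j) t := by
    simpa using ((hasDerivAt_id t).mul_const (B i j)).const_add (A i j)
  have det : HasDerivAt (fun s : ℝ => (A + s • B).det)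
      (∑ i, ((A + t • B).updateRow i (B i)).det) t := by
    have hd : DifferentiableAt ℝ (fun s : ℝ => (A + s • B).det) t :=
      (contDiffAt_matrix_det (m := 1) fun i j => by
        simp only [Matrix.add_apply, Matrix.smul_apply]; fun_prop).differentiableAt one_ne_zero
    convert! hd.hasDerivAt using 1
    rw [← fderiv_apply_one_eq_deriv,
      fderiv_matrix_det fun i j => (entry i j).differentiableAt]
    simp only [fderiv_apply_one_eq_deriv, (entry _ _).deriv]
  exact ((hφ _).hasFDerivAt.comp_hasDerivAt t line).mul det

theorem continuous_homotopyDerivative {φ : (ι → ℝ) → ℝ} (hφ : ContDiff ℝ 1 φ) :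
    Continuous fun p : ((ι → ℝ) × (ι → ℝ)) × (Matrix ι ι ℝ × Matrix ι ι ℝ) × ℝ =>
      homotopyDerivative φ p.1.1 p.1.2 p.2.1.1 p.2.1.2 p.2.2 := by
  unfold homotopyDerivative
  refine .add (.mul ?_ (Continuous.matrix_det (by fun_prop)))
    (.mul (hφ.continuous.comp (by fun_prop))
      (continuous_finsetSum _ fun i _ => Continuous.matrix_det ?_))
  · exact ((hφ.continuous_fderiv one_ne_zero).comp (by fun_prop)).clm_apply (by fun_prop)
  · exact Continuous.matrix_updateRow i (by fun_prop) (by fun_prop)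

theorem intervalIntegral_homotopyDerivative {φ : (ι → ℝ) → ℝ} (hφ : ContDiff ℝ 1 φ) (a c : ι → ℝ)
    (A B : Matrix ι ι ℝ) :
    ∫ t in (0 : ℝ)..1, homotopyDerivative φ a c A B t = φ (a + c) * (A + B).det - φ a * A.det := by
  have cont : Continuous fun t => homotopyDerivative φ a c A B t :=
    (continuous_homotopyDerivative hφ).comp
      (continuous_const.prodMk (continuous_const.prodMk continuous_id) :
        Continuous fun t : ℝ => ((a, c), (A, B), t))
  rw [intervalIntegral.integral_eq_sub_of_hasDerivAt
    (fun t _ => hasDerivAt_mul_det (hφ.differentiable one_ne_zero) a c A B t)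
    (cont.intervalIntegrable 0 1)]
  simp only [one_smul, zero_smul, add_zero]

variable {E : Type*} [NormedAddCommGroup E] [NormedSpace ℝ E]

theorem det_jacobiMatrix_update_mul {φ : (ι → ℝ) → ℝ} {F : ι → E → ℝ} {h : E → ℝ} {x : E}
    (v : ι → E) (hφ : DifferentiableAt ℝ φ fun k => F k x)
    (hF : ∀ k, DifferentiableAt ℝ (F k) x) (hh : DifferentiableAt ℝ h x) (i : ι) :
    (jacobiMatrix v (Function.update F i fun y => φ (fun k => F k y) * h y) x).det =
      h x * fderiv ℝ φ (fun k => F k x) (Pi.single i 1) * (jacobiMatrix v F x).det +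
        φ (fun k => F k x) *
          ((jacobiMatrix v F x).updateRow i fun j => fderiv ℝ h x (v j)).det := by
  set J := jacobiMatrix v F x
  have hFx : HasFDerivAt (fun y k => F k y) (.pi fun k => fderiv ℝ (F k) x) x :=
    hasFDerivAt_pi.2 fun k => (hF k).hasFDerivAt
  have hmul : HasFDerivAt (fun y => φ (fun k => F k y) * h y) (φ (fun k => F k x) • fderiv ℝ h x +
      h x • (fderiv ℝ φ fun k => F k x) ∘L .pi fun k => fderiv ℝ (F k) x) x :=
    (hφ.hasFDerivAt.comp x hFx).mul hh.hasFDerivAt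
  have update_eq : jacobiMatrix v (Function.update F i fun y => φ (fun k => F k y) * h y) x =
      J.updateRow i (φ (fun k => F k x) • (fun j => fderiv ℝ h x (v j)) +
        ∑ k, (h x * fderiv ℝ φ (fun k => F k x) (Pi.single k 1)) • J k) := by
    ext k j
    obtain rfl | hk := eq_or_ne k i
    · have chain : fderiv ℝ φ (fun k => F k x) (fun k => J k j) =
          ∑ k, J k j * fderiv ℝ φ (fun k => F k x) (Pi.single k 1) :=
        linearMap_apply_eq_sum_mul_single (fderiv ℝ φ fun k => F k x).toLinearMap _
      simp only [jacobiMatrix, Matrix.of_apply, Function.update_self, Matrix.updateRow_self,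
        hmul.fderiv, Pi.add_apply, Pi.smul_apply, Finset.sum_apply, smul_eq_mul]
      change _ + h x * fderiv ℝ φ (fun k => F k x) (fun k => J k j) = _
      rw [chain, Finset.mul_sum]
      simp only [mul_assoc, mul_comm (J _ _)]
      rfl
    · simp only [jacobiMatrix, Matrix.of_apply, Function.update_of_ne hk, Matrix.updateRow_ne hk, J]
  rw [update_eq, Matrix.det_updateRow_add, Matrix.det_updateRow_smul, Matrix.det_updateRow_sum,
    smul_eq_mul, add_comm]

theorem sum_det_jacobiMatrix_update_eq_homotopyDerivative (v : ι → E) {f g : ι → E → ℝ} {x : E}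
    (hf : ∀ k, DifferentiableAt ℝ (f k) x) (hg : ∀ k, DifferentiableAt ℝ (g k) x)
    {φ : (ι → ℝ) → ℝ} (hφ : Differentiable ℝ φ) (t : ℝ) :
    ∑ i, (jacobiMatrix v (Function.update (f + t • g) i fun y =>
        φ (fun k => (f + t • g) k y) * g i y) x).det =
      homotopyDerivative φ (fun k => f k x) (fun k => g k x)
        (jacobiMatrix v f x) (jacobiMatrix v g x) t := by
  have hF (k : ι) : DifferentiableAt ℝ ((f + t • g) k) x := (hf k).add ((hg k).const_smul t)
  simp only [det_jacobiMatrix_update_mul v (hφ _) hF (hg _), Finset.sum_add_distrib,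
    ← Finset.sum_mul, ← Finset.mul_sum, jacobiMatrix_add_smul v hf hg]
  have grad (a c : ι → ℝ) : ∑ k, c k * fderiv ℝ φ a (Pi.single k 1) = fderiv ℝ φ a c :=
    (linearMap_apply_eq_sum_mul_single (fderiv ℝ φ a).toLinearMap c).symm
  rw [grad]
  rfl

theorem continuousOn_pi_of_contDiffAt {κ : Type*} {f : κ → E → ℝ} {s : Set E}
    {m : WithTop ℕ∞} (hf : ∀ k, ∀ x ∈ s, ContDiffAt ℝ m (f k) x) :
    ContinuousOn (fun x k => f k x) s :=
  continuousOn_pi.2 fun k x hx => (hf k x hx).continuousAt.continuousWithinAt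

variable [FiniteDimensional ℝ E] [MeasurableSpace E] [BorelSpace E]
  (μ : Measure E) [μ.IsAddHaarMeasure]

theorem setIntegral_homotopyDerivative_eq_zero (v : ι → E) {Ω : Set E} (hΩ : IsOpen Ω)
    (hΩb : Bornology.IsBounded Ω) {f g : ι → E → ℝ}
    (hf : ∀ k, ∀ x ∈ closure Ω, ContDiffAt ℝ 2 (f k) x)
    (hg : ∀ k, ∀ x ∈ closure Ω, ContDiffAt ℝ 2 (g k) x) {φ : (ι → ℝ) → ℝ} (hφ : ContDiff ℝ 1 φ)
    {t : ℝ} (h0 : ∀ x ∈ frontier Ω, (fun k => (f + t • g) k x) ∉ tsupport φ) :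
    ∫ x in Ω, homotopyDerivative φ (fun k => f k x) (fun k => g k x)
      (jacobiMatrix v f x) (jacobiMatrix v g x) t ∂μ = 0 := by
  have hF (k : ι) (x : E) (hx : x ∈ closure Ω) : ContDiffAt ℝ 2 ((f + t • g) k) x :=
    (hf k x hx).add ((hg k x hx).const_smul t)
  let u (i : ι) (x : E) : ℝ := φ (fun k => (f + t • g) k x) * g i x
  have hu (i : ι) (x : E) (hx : x ∈ closure Ω) : ContDiffAt ℝ 1 (u i) x :=
    (hφ.contDiffAt.comp x (contDiffAt_pi.2 fun k => (hF k x hx).of_le one_le_two)).mul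
      ((hg i x hx).of_le one_le_two)
  have hu0 (i : ι) (x : E) (hx : x ∈ frontier Ω) : u i =ᶠ[𝓝 x] 0 := by
    have cont : ContinuousAt (fun y k => (f + t • g) k y) x :=
      continuousAt_pi.2 fun k => (hF k x (frontier_subset_closure hx)).continuousAt
    filter_upwards [cont.eventually (notMem_tsupport_iff_eventuallyEq.1 (h0 x hx))] with y hy
    simp only [u, hy, Pi.zero_apply, zero_mul]
  have updated_smooth (i k : ι) (x : E) (hx : x ∈ closure Ω) :
      ContDiffAt ℝ 1 (Function.update (f + t • g) i (u i) k) x := by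
    obtain rfl | hk := eq_or_ne k i
    · exact Function.update_self k .. ▸ hu k x hx
    · exact Function.update_of_ne hk .. ▸ (hF k x hx).of_le one_le_two
  have det_cont (i : ι) : ContinuousOn
      (fun x => (jacobiMatrix v (Function.update (f + t • g) i (u i)) x).det) (closure Ω) :=
    continuous_id.matrix_det.comp_continuousOn (continuousOn_jacobiMatrix v (updated_smooth i))
  calc _ = ∫ x in Ω, ∑ i, (jacobiMatrix v (Function.update (f + t • g) i (u i)) x).det ∂μ := by
        refine setIntegral_congr_fun hΩ.measurableSet fun x hx => ?_
        exact (sum_det_jacobiMatrix_update_eq_homotopyDerivative v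
          (fun k => (hf k x (subset_closure hx)).differentiableAt two_ne_zero)
          (fun k => (hg k x (subset_closure hx)).differentiableAt two_ne_zero)
          (hφ.differentiable one_ne_zero) t).symm
    _ = ∑ i, ∫ x in Ω, (jacobiMatrix v (Function.update (f + t • g) i (u i)) x).det ∂μ :=
        integral_finsetSum _ fun i _ =>
          ((det_cont i).integrableOn_compact hΩb.isCompact_closure).mono_set subset_closure
    _ = 0 := Finset.sum_eq_zero fun i _ => by
        refine setIntegral_det_jacobiMatrix_eq_zero μ v hΩ hΩb
          (fun x hx => updated_smooth i i x (subset_closure hx)) ?_ fun k hk => ?_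
        · exact Function.update_self i .. ▸ hu0 i
        · exact Function.update_of_ne hk .. ▸ hF k

theorem integrable_homotopyDerivative (v : ι → E) {Ω : Set E}
    (hΩb : Bornology.IsBounded Ω) {f g : ι → E → ℝ}
    (hf : ∀ k, ∀ x ∈ closure Ω, ContDiffAt ℝ 1 (f k) x)
    (hg : ∀ k, ∀ x ∈ closure Ω, ContDiffAt ℝ 1 (g k) x) {φ : (ι → ℝ) → ℝ}
    (hφ : ContDiff ℝ 1 φ) (a b : ℝ) :
    Integrable (Function.uncurry fun t x => homotopyDerivative φ (fun k => f k x) (fun k => g k x)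
      (jacobiMatrix v f x) (jacobiMatrix v g x) t)
      ((volume.restrict (uIoc a b)).prod (μ.restrict Ω)) := by
  have data : ContinuousOn (fun p : ℝ × E => (((fun k => f k p.2), (fun k => g k p.2)),
      (jacobiMatrix v f p.2, jacobiMatrix v g p.2), p.1)) (uIcc a b ×ˢ closure Ω) := by
    have maps : MapsTo Prod.snd (uIcc a b ×ˢ closure Ω) (closure Ω) := fun p hp => hp.2
    exact (((continuousOn_pi_of_contDiffAt hf).comp continuousOn_snd maps).prodMk
      ((continuousOn_pi_of_contDiffAt hg).comp continuousOn_snd maps)).prodMk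
      ((((continuousOn_jacobiMatrix v hf).comp continuousOn_snd maps).prodMk
        ((continuousOn_jacobiMatrix v hg).comp continuousOn_snd maps)).prodMk continuousOn_fst)
  rw [Measure.prod_restrict]
  exact (((continuous_homotopyDerivative hφ).comp_continuousOn data).integrableOn_compact
    (isCompact_uIcc.prod hΩb.isCompact_closure)).mono_set
      (prod_mono uIoc_subset_uIcc subset_closure)

theorem integrableOn_comp_mul_det_jacobiMatrix (v : ι → E) {Ω : Set E}
    (hΩb : Bornology.IsBounded Ω) {f : ι → E → ℝ}
    (hf : ∀ k, ∀ x ∈ closure Ω, ContDiffAt ℝ 1 (f k) x) {φ : (ι → ℝ) → ℝ} (hφ : Continuous φ) :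
    IntegrableOn (fun x => φ (fun k => f k x) * (jacobiMatrix v f x).det) Ω μ :=
  (((hφ.comp_continuousOn (continuousOn_pi_of_contDiffAt hf)).mul
    (continuous_id.matrix_det.comp_continuousOn (continuousOn_jacobiMatrix v hf))
    ).integrableOn_compact hΩb.isCompact_closure).mono_set subset_closure

theorem setIntegral_comp_mul_det_jacobiMatrix_add (v : ι → E) {Ω : Set E} (hΩ : IsOpen Ω)
    (hΩb : Bornology.IsBounded Ω) {f g : ι → E → ℝ}
    (hf : ∀ k, ∀ x ∈ closure Ω, ContDiffAt ℝ 2 (f k) x)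
    (hg : ∀ k, ∀ x ∈ closure Ω, ContDiffAt ℝ 2 (g k) x) {φ : (ι → ℝ) → ℝ} (hφ : ContDiff ℝ 1 φ)
    (h0 : ∀ t ∈ Icc (0 : ℝ) 1, ∀ x ∈ frontier Ω, (fun k => (f + t • g) k x) ∉ tsupport φ) :
    ∫ x in Ω, φ (fun k => (f + g) k x) * (jacobiMatrix v (f + g) x).det ∂μ =
      ∫ x in Ω, φ (fun k => f k x) * (jacobiMatrix v f x).det ∂μ := by
  have hf1 (k : ι) (x : E) (hx : x ∈ closure Ω) := (hf k x hx).of_le one_le_two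
  have hg1 (k : ι) (x : E) (hx : x ∈ closure Ω) := (hg k x hx).of_le one_le_two
  let P' (t : ℝ) (x : E) : ℝ := homotopyDerivative φ (fun k => f k x) (fun k => g k x)
    (jacobiMatrix v f x) (jacobiMatrix v g x) t
  have ftc (x : E) (hx : x ∈ Ω) : ∫ t in (0 : ℝ)..1, P' t x =
      φ (fun k => (f + g) k x) * (jacobiMatrix v (f + g) x).det -
        φ (fun k => f k x) * (jacobiMatrix v f x).det := by
    have hJ : jacobiMatrix v (f + g) x = jacobiMatrix v f x + (1 : ℝ) • jacobiMatrix v g x := by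
      rw [← jacobiMatrix_add_smul v
        (fun k => (hf1 k x (subset_closure hx)).differentiableAt one_ne_zero)
        (fun k => (hg1 k x (subset_closure hx)).differentiableAt one_ne_zero), one_smul]
    rw [hJ, one_smul]
    exact intervalIntegral_homotopyDerivative hφ _ _ _ _
  have int_start := integrableOn_comp_mul_det_jacobiMatrix μ v hΩb hf1 hφ.continuous
  have int_end := integrableOn_comp_mul_det_jacobiMatrix μ v (f := f + g) hΩb
    (fun k x hx => (hf1 k x hx).add (hg1 k x hx)) hφ.continuous
  rw [← sub_eq_zero, ← integral_sub int_end int_start,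
    ← setIntegral_congr_fun hΩ.measurableSet ftc, ← intervalIntegral_integral_swap
      (integrable_homotopyDerivative μ v hΩb hf1 hg1 hφ 0 1)]
  refine intervalIntegral.integral_zero_ae (Eventually.of_forall fun t ht => ?_)
  rw [uIoc_of_le zero_le_one] at ht
  exact setIntegral_homotopyDerivative_eq_zero μ v hΩ hΩb hf hg hφ
    (h0 t (Ioc_subset_Icc_self ht))

end Homotopy

section ChangeOfMap

open MeasureTheory

variable {E : Type*} [NormedAddCommGroup E] [NormedSpace ℝ E]

theorem det_jacobiMatrix_coord {ι : Type*} [Fintype ι] [DecidableEq ι] (b : Module.Basis ι ℝ E)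
    {f : E → E} {x : E} (hf : DifferentiableAt ℝ f x) :
    (jacobiMatrix b (fun k y => b.equivFunL (f y) k) x).det = (fderiv ℝ f x).det := by
  rw [ContinuousLinearMap.det, ← LinearMap.det_toMatrix b]
  congr 1
  ext i j
  let coord : E →L[ℝ] ℝ := .proj i ∘L (b.equivFunL : E →L[ℝ] ι → ℝ)
  have hd : fderiv ℝ (fun y => b.equivFunL (f y) i) x = coord ∘L fderiv ℝ f x :=
    (coord.hasFDerivAt.comp x hf.hasFDerivAt).fderiv
  rw [LinearMap.toMatrix_apply, jacobiMatrix, Matrix.of_apply, hd]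
  rfl

variable [FiniteDimensional ℝ E] [MeasurableSpace E] [BorelSpace E]
  (μ : Measure E) [μ.IsAddHaarMeasure]

theorem setIntegral_comp_mul_det_fderiv_eq {Ω : Set E} (hΩ : IsOpen Ω)
    (hΩb : Bornology.IsBounded Ω) {f₀ f₁ : E → E} (hf₀ : ∀ x ∈ closure Ω, ContDiffAt ℝ 2 f₀ x)
    (hf₁ : ∀ x ∈ closure Ω, ContDiffAt ℝ 2 f₁ x) {φ : E → ℝ} (hφ : ContDiff ℝ 1 φ)
    (h : ∀ x ∈ frontier Ω, Disjoint (segment ℝ (f₀ x) (f₁ x)) (tsupport φ)) :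
    ∫ x in Ω, φ (f₁ x) * (fderiv ℝ f₁ x).det ∂μ =
      ∫ x in Ω, φ (f₀ x) * (fderiv ℝ f₀ x).det ∂μ := by
  let b := Module.finBasis ℝ E
  let e : E ≃L[ℝ] (Fin (Module.finrank ℝ E) → ℝ) := b.equivFunL
  let F (f : E → E) (k : Fin (Module.finrank ℝ E)) (x : E) : ℝ := e (f x) k
  have F_smooth {f : E → E} (hf : ∀ x ∈ closure Ω, ContDiffAt ℝ 2 f x) (k) (x)
      (hx : x ∈ closure Ω) : ContDiffAt ℝ 2 (F f k) x :=
    contDiffAt_pi.1 (e.contDiff.contDiffAt.comp x (hf x hx)) k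
  have integral_eq {f : E → E} (hf : ∀ x ∈ closure Ω, ContDiffAt ℝ 2 f x) :
      ∫ x in Ω, φ (e.symm fun k => F f k x) * (jacobiMatrix b (F f) x).det ∂μ =
        ∫ x in Ω, φ (f x) * (fderiv ℝ f x).det ∂μ := by
    refine setIntegral_congr_fun hΩ.measurableSet fun x hx => ?_
    have hd := (hf x (subset_closure hx)).differentiableAt two_ne_zero
    exact congr_arg₂ (· * ·) (congr_arg φ (e.symm_apply_apply (f x)))
      (det_jacobiMatrix_coord b hd)
  have add_sub : F f₀ + (F f₁ - F f₀) = F f₁ := add_sub_cancel _ _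
  rw [← integral_eq hf₀, ← integral_eq hf₁, ← add_sub]
  refine setIntegral_comp_mul_det_jacobiMatrix_add μ b (φ := φ ∘ e.symm) hΩ hΩb (F_smooth hf₀)
    (fun k x hx => (F_smooth hf₁ k x hx).sub (F_smooth hf₀ k x hx)) (hφ.comp e.symm.contDiff)
    fun t ht x hx hmem => ?_
  have preimage : tsupport (φ ∘ e.symm) = e.symm ⁻¹' tsupport φ :=
    tsupport_comp_eq_preimage φ e.symm.toHomeomorph
  rw [preimage] at hmem
  refine disjoint_left.1 (h x hx) (segment_eq_image' ℝ (f₀ x) (f₁ x) ▸ mem_image_of_mem _ ht) ?_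
  suffices f₀ x + t • (f₁ x - f₀ x) =
      e.symm fun k => (F f₀ + t • fun k x => F f₁ k x - F f₀ k x) k x from this ▸ hmem
  apply e.injective
  rw [e.apply_symm_apply, map_add, map_smul, map_sub]
  rfl

end ChangeOfMap

section Sheets

open MeasureTheory

theorem exists_isOpen_injOn_image_mem_nhds {𝕜 E F : Type*} [NontriviallyNormedField 𝕜]
    [NormedAddCommGroup E] [NormedSpace 𝕜 E] [CompleteSpace E] [NormedAddCommGroup F]
    [NormedSpace 𝕜 F] {f : E → F} {f' : E ≃L[𝕜] F} {p : E}
    (hf : HasStrictFDerivAt f (f' : E →L[𝕜] F) p) {W : Set E} (hW : W ∈ 𝓝 p) :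
    ∃ U ⊆ W, IsOpen U ∧ p ∈ U ∧ InjOn f U ∧ f '' U ∈ 𝓝 (f p) := by
  set e := hf.toOpenPartialHomeomorph f
  have hU : IsOpen (e.source ∩ interior W) := e.open_source.inter isOpen_interior
  have hp : p ∈ e.source ∩ interior W :=
    ⟨hf.mem_toOpenPartialHomeomorph_source, mem_interior_iff_mem_nhds.2 hW⟩
  exact ⟨_, inter_subset_right.trans interior_subset, hU, hp, e.injOn.mono inter_subset_left,
    hf.map_nhds_eq_of_equiv ▸ image_mem_map (hU.mem_nhds hp)⟩

variable {E : Type*} [NormedAddCommGroup E] [NormedSpace ℝ E] [FiniteDimensional ℝ E]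

theorem exists_sheet {f : E → E} {p : E} (hf : ContDiffAt ℝ 1 f p)
    (hdet : (fderiv ℝ f p).det ≠ 0) {W : Set E} (hW : W ∈ 𝓝 p) :
    ∃ U ⊆ W, IsOpen U ∧ p ∈ U ∧ InjOn f U ∧ f '' U ∈ 𝓝 (f p) :=
  exists_isOpen_injOn_image_mem_nhds
    (f' := (fderiv ℝ f p).toContinuousLinearEquivOfDetNeZero hdet)
    (hf.hasStrictFDerivAt one_ne_zero) hW

theorem finite_fiber_of_det_fderiv_ne_zero {f : E → E} {K : Set E} {q : E} (hK : IsCompact K)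
    (hf : ∀ x ∈ K, ContDiffAt ℝ 1 f x) (hq : ∀ x ∈ K, f x = q → (fderiv ℝ f x).det ≠ 0) :
    {x ∈ K | f x = q}.Finite := by
  by_contra hinf
  have closed : IsClosed {x ∈ K | f x = q} :=
    ContinuousOn.preimage_isClosed_of_isClosed
      (fun x hx => (hf x hx).continuousAt.continuousWithinAt) hK.isClosed isClosed_singleton
  obtain ⟨x, hx, hacc⟩ := Set.Infinite.exists_accPt_of_subset_isCompact hinf
    (hK.of_isClosed_subset closed (sep_subset _ _)) Subset.rfl
  obtain ⟨U, -, hU, hxU, inj, -⟩ := exists_sheet (hf x hx.1) (hq x hx.1 hx.2) univ_mem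
  obtain ⟨y, ⟨hyU, hy⟩, hyx⟩ := accPt_iff_nhds.1 hacc U (hU.mem_nhds hxU)
  exact hyx (inj hyU hxU (hy.2.trans hx.2.symm))

variable [MeasurableSpace E] [BorelSpace E] (μ : Measure E) [μ.IsAddHaarMeasure]

theorem setIntegral_comp_mul_abs_det_fderiv {f : E → E} {U : Set E} (hU : IsOpen U)
    (hf : DifferentiableOn ℝ f U) (inj : InjOn f U) {φ : E → ℝ} (hφ : Function.support φ ⊆ f '' U) :
    ∫ x in U, φ (f x) * |(fderiv ℝ f x).det| ∂μ = ∫ y, φ y ∂μ := calc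
  _ = ∫ x in U, |(fderiv ℝ f x).det| • φ (f x) ∂μ := by simp only [smul_eq_mul, mul_comm]
  _ = ∫ y in f '' U, φ y ∂μ :=
    (integral_image_eq_integral_abs_det_fderiv_smul μ hU.measurableSet
      (fun x hx => (hf.differentiableAt (hU.mem_nhds hx)).hasFDerivAt.hasFDerivWithinAt) inj φ).symm
  _ = ∫ y, φ y ∂μ := setIntegral_eq_integral_of_forall_compl_eq_zero fun _ hy =>
    Function.notMem_support.1 fun h => hy (hφ h)

theorem exists_setIntegral_comp_mul_abs_det_fderiv_eq {f : E → E} {Ω : Set E} (hΩ : IsOpen Ω)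
    (hf : ∀ x ∈ Ω, ContDiffAt ℝ 1 f x) {T : Finset E}
    (hT : ∀ x ∈ T, x ∈ Ω ∧ f x = 0 ∧ (fderiv ℝ f x).det ≠ 0) :
    ∃ V ⊆ Ω, IsOpen V ∧ ↑T ⊆ V ∧ ∀ᶠ ε in 𝓝 (0 : ℝ), ∀ φ : E → ℝ, Integrable φ μ →
      Function.support φ ⊆ ball 0 ε →
        ∫ x in V, φ (f x) * |(fderiv ℝ f x).det| ∂μ = T.card * ∫ y, φ y ∂μ := by
  obtain ⟨W, hW, hWdisj⟩ := T.finite_toSet.t2_separation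
  have sheet (x : E) (hx : x ∈ T) :=
    exists_sheet (hf x (hT x hx).1) (hT x hx).2.2
      (inter_mem (hΩ.mem_nhds (hT x hx).1) ((hW x).2.mem_nhds (hW x).1))
  choose! U hUW hUopen hxU inj image using sheet
  have disj : (T : Set E).PairwiseDisjoint U := fun x hx y hy hxy =>
    (hWdisj hx hy hxy).mono ((hUW x hx).trans inter_subset_right)
      ((hUW y hy).trans inter_subset_right)
  have image_all : ⋂ x ∈ T, f '' U x ∈ 𝓝 (0 : E) :=
    (Filter.biInter_finset_mem T).2 fun x hx => (hT x hx).2.1 ▸ image x hx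
  refine ⟨⋃ x ∈ T, U x, iUnion₂_subset fun x hx => (hUW x hx).trans inter_subset_left,
    isOpen_biUnion hUopen, fun x hx => mem_biUnion hx (hxU x hx), ?_⟩
  filter_upwards [eventually_ball_subset image_all] with ε hε φ hφ_int hφ
  have diff {x y : E} (hx : x ∈ T) (hy : y ∈ U x) : DifferentiableAt ℝ f y :=
    (hf y (hUW x hx hy).1).differentiableAt one_ne_zero
  have sheet_integral (x : E) (hx : x ∈ T) :
      ∫ y in U x, φ (f y) * |(fderiv ℝ f y).det| ∂μ = ∫ y, φ y ∂μ :=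
    setIntegral_comp_mul_abs_det_fderiv μ (hUopen x hx)
      (fun y hy => (diff hx hy).differentiableWithinAt) (inj x hx)
      (hφ.trans (hε.trans (biInter_subset_of_mem hx)))
  have sheet_integrable (x : E) (hx : x ∈ T) :
      IntegrableOn (fun y => φ (f y) * |(fderiv ℝ f y).det|) (U x) μ := by
    simp only [mul_comm (φ _)]
    exact (integrableOn_image_iff_integrableOn_abs_det_fderiv_smul μ (hUopen x hx).measurableSet
      (fun y hy => (diff hx hy).hasFDerivAt.hasFDerivWithinAt) (inj x hx) φ).1
        hφ_int.integrableOn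
  rw [integral_biUnion_finset T (fun x hx => (hUopen x hx).measurableSet) disj sheet_integrable,
    Finset.sum_congr rfl sheet_integral, Finset.sum_const, nsmul_eq_mul]

theorem card_mul_integral_le_setIntegral_comp_mul_abs_det_fderiv {f : E → E} {Ω : Set E}
    (hΩ : IsOpen Ω) (hΩb : Bornology.IsBounded Ω) (hf : ∀ x ∈ closure Ω, ContDiffAt ℝ 1 f x)
    {T : Finset E} (hT : ∀ x ∈ T, x ∈ Ω ∧ f x = 0 ∧ (fderiv ℝ f x).det ≠ 0) :
    ∀ᶠ ε in 𝓝 (0 : ℝ), ∀ φ : E → ℝ, Continuous φ → 0 ≤ φ → Function.support φ ⊆ ball 0 ε →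
      T.card * ∫ y, φ y ∂μ ≤ ∫ x in Ω, φ (f x) * |(fderiv ℝ f x).det| ∂μ := by
  obtain ⟨V, hVΩ, -, -, small⟩ := exists_setIntegral_comp_mul_abs_det_fderiv_eq μ hΩ
    (fun x hx => hf x (subset_closure hx)) hT
  filter_upwards [small] with ε hε φ φ_cont φ_nonneg hφ
  have integrable : IntegrableOn (fun x => φ (f x) * |(fderiv ℝ f x).det|) Ω μ :=
    (ContinuousOn.integrableOn_compact hΩb.isCompact_closure fun x hx =>
      ((φ_cont.continuousAt.comp (hf x hx).continuousAt).mul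
        (ContinuousLinearMap.continuous_det.continuousAt.comp
          ((hf x hx).continuousAt_fderiv one_ne_zero)).abs).continuousWithinAt).mono_set
      subset_closure
  rw [← hε φ (φ_cont.integrable_of_hasCompactSupport
    (HasCompactSupport.of_support_subset_isCompact (isCompact_closedBall 0 ε)
      (hφ.trans ball_subset_closedBall))) hφ]
  exact setIntegral_mono_set integrable
    (Eventually.of_forall fun x => mul_nonneg (φ_nonneg _) (abs_nonneg _)) hVΩ.eventuallyLE

theorem setIntegral_comp_mul_abs_det_fderiv_eq_card_mul {f : E → E} {Ω : Set E} (hΩ : IsOpen Ω)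
    (hΩb : Bornology.IsBounded Ω) (hf : ∀ x ∈ closure Ω, ContDiffAt ℝ 1 f x) {T : Finset E}
    (hT : ∀ x ∈ T, x ∈ Ω ∧ f x = 0 ∧ (fderiv ℝ f x).det ≠ 0)
    (hall : ∀ x ∈ closure Ω, f x = 0 → x ∈ T) :
    ∀ᶠ ε in 𝓝 (0 : ℝ), ∀ φ : E → ℝ, Integrable φ μ → Function.support φ ⊆ ball 0 ε →
      ∫ x in Ω, φ (f x) * |(fderiv ℝ f x).det| ∂μ = T.card * ∫ y, φ y ∂μ := by
  obtain ⟨V, hVΩ, hV, hTV, small⟩ := exists_setIntegral_comp_mul_abs_det_fderiv_eq μ hΩ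
    (fun x hx => hf x (subset_closure hx)) hT
  have compact : IsCompact (f '' (closure Ω \ V)) :=
    (hΩb.isCompact_closure.diff hV).image_of_continuousOn
      fun x hx => (hf x hx.1).continuousAt.continuousWithinAt
  have avoid : (f '' (closure Ω \ V))ᶜ ∈ 𝓝 (0 : E) := by
    refine compact.isClosed.compl_mem_nhds ?_
    rintro ⟨x, hx, hx0⟩
    exact hx.2 (hTV (hall x hx.1 hx0))
  filter_upwards [small, eventually_ball_subset avoid] with ε hε hε' φ hφ_int hφ
  rw [← hε φ hφ_int hφ]
  refine setIntegral_eq_of_subset_of_forall_sdiff_eq_zero hΩ.measurableSet hVΩ fun x hx => ?_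
  rw [Function.notMem_support.1 fun h => hε' (hφ h)
    (mem_image_of_mem f ⟨subset_closure hx.1, hx.2⟩), zero_mul]

end Sheets

section Rouche

open MeasureTheory

theorem disjoint_segment_closedBall {E : Type*} [NormedAddCommGroup E] [NormedSpace ℝ E] {a b : E}
    {ε : ℝ} (h : ‖a - b‖ + ε < ‖a‖) : Disjoint (segment ℝ a b) (closedBall 0 ε) := by
  rw [disjoint_left]
  intro y hy hyε
  have near : ‖y - a‖ ≤ ‖a - b‖ := by
    simpa only [mem_closedBall, dist_eq_norm] using segment_subset_closedBall_left a b hy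
  linarith [mem_closedBall_zero_iff.1 hyε, norm_sub_norm_le a y, norm_sub_rev a y]

theorem isCompact_frontier_of_isBounded {X : Type*} [PseudoMetricSpace X] [ProperSpace X]
    {s : Set X} (hs : Bornology.IsBounded s) : IsCompact (frontier s) :=
  hs.isCompact_closure.of_isClosed_subset isClosed_frontier frontier_subset_closure

theorem eventually_add_lt_of_isCompact {X : Type*} [TopologicalSpace X] {K : Set X}
    (hK : IsCompact K) {u w : X → ℝ} (hu : ContinuousOn u K) (hw : ContinuousOn w K)
    (h : ∀ x ∈ K, u x < w x) : ∀ᶠ ε in 𝓝 (0 : ℝ), ∀ x ∈ K, u x + ε < w x := by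
  obtain rfl | hne := K.eq_empty_or_nonempty
  · exact Eventually.of_forall fun _ _ => False.elim
  obtain ⟨x₀, hx₀, hmin⟩ := hK.exists_isMinOn hne (hw.sub hu)
  filter_upwards [eventually_lt_nhds (sub_pos.2 (h x₀ hx₀))] with ε hε x hx
  have : w x₀ - u x₀ ≤ w x - u x := hmin hx
  linarith

variable {E : Type*} [NormedAddCommGroup E] [NormedSpace ℝ E] [FiniteDimensional ℝ E]

theorem setIntegral_comp_mul_abs_det_fderiv_eq_of_norm_sub_lt [MeasurableSpace E] [BorelSpace E]
    (μ : Measure E) [μ.IsAddHaarMeasure] {Ω : Set E} (hΩ : IsOpen Ω)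
    (hΩb : Bornology.IsBounded Ω) {F G : E → E} (hF : ∀ x ∈ closure Ω, ContDiffAt ℝ 2 F x)
    (hG : ∀ x ∈ closure Ω, ContDiffAt ℝ 2 G x) (hF_pos : ∀ x ∈ Ω, 0 ≤ (fderiv ℝ F x).det)
    (hG_pos : ∀ x ∈ Ω, 0 ≤ (fderiv ℝ G x).det) (hlt : ∀ x ∈ frontier Ω, ‖F x - G x‖ < ‖F x‖) :
    ∀ᶠ ε in 𝓝 (0 : ℝ), ∀ φ : E → ℝ, ContDiff ℝ 1 φ → tsupport φ ⊆ closedBall 0 ε →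
      ∫ x in Ω, φ (G x) * |(fderiv ℝ G x).det| ∂μ =
        ∫ x in Ω, φ (F x) * |(fderiv ℝ F x).det| ∂μ := by
  have cont {H : E → E} (hH : ∀ x ∈ closure Ω, ContDiffAt ℝ 2 H x) : ContinuousOn H (frontier Ω) :=
    fun x hx => (hH x (frontier_subset_closure hx)).continuousAt.continuousWithinAt
  have remove_abs {H : E → E} (hH : ∀ x ∈ Ω, 0 ≤ (fderiv ℝ H x).det) (φ : E → ℝ) :
      ∫ x in Ω, φ (H x) * |(fderiv ℝ H x).det| ∂μ = ∫ x in Ω, φ (H x) * (fderiv ℝ H x).det ∂μ :=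
    setIntegral_congr_fun hΩ.measurableSet fun x hx => by rw [abs_of_nonneg (hH x hx)]
  filter_upwards [eventually_add_lt_of_isCompact (isCompact_frontier_of_isBounded hΩb)
    ((cont hF).sub (cont hG)).norm (cont hF).norm hlt] with ε hε φ hφ hφ_supp
  rw [remove_abs hF_pos, remove_abs hG_pos]
  exact setIntegral_comp_mul_det_fderiv_eq μ hΩ hΩb hF hG hφ fun x hx =>
    (disjoint_segment_closedBall (hε x hx)).mono_right hφ_supp

/-- One half of **Rouché's theorem**: for a bump function `φ` concentrated at `0`, the integral of
`φ ∘ F` against the Jacobian counts the zeros of `F`, and that of `φ ∘ G` counts at least `T`. -/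
theorem card_le_ncard_zeros_of_norm_sub_lt {Ω : Set E} (hΩ : IsOpen Ω)
    (hΩb : Bornology.IsBounded Ω) {F G : E → E} (hF : ∀ x ∈ closure Ω, ContDiffAt ℝ 2 F x)
    (hG : ∀ x ∈ closure Ω, ContDiffAt ℝ 2 G x) (hF_pos : ∀ x ∈ Ω, 0 ≤ (fderiv ℝ F x).det)
    (hG_pos : ∀ x ∈ Ω, 0 ≤ (fderiv ℝ G x).det)
    (hF_reg : ∀ x ∈ Ω, F x = 0 → (fderiv ℝ F x).det ≠ 0)
    (hlt : ∀ x ∈ frontier Ω, ‖F x - G x‖ < ‖F x‖) {T : Finset E}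
    (hT : ∀ x ∈ T, x ∈ Ω ∧ G x = 0 ∧ (fderiv ℝ G x).det ≠ 0) :
    T.card ≤ {x ∈ Ω | F x = 0}.ncard := by
  borelize E
  let μ : Measure E := Measure.addHaar
  have zero_mem {x : E} (hx : x ∈ closure Ω) (hx0 : F x = 0) : x ∈ Ω := by
    by_contra hxΩ
    have := hlt x ⟨hx, hΩ.interior_eq.symm ▸ hxΩ⟩
    rw [hx0, norm_zero] at this
    exact this.not_ge (norm_nonneg _)
  have zeros_finite : {x ∈ Ω | F x = 0}.Finite :=
    (finite_fiber_of_det_fderiv_ne_zero hΩb.isCompact_closure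
      (fun x hx => (hF x hx).of_le one_le_two)
      fun x hx hx0 => hF_reg x (zero_mem hx hx0) hx0).subset
        fun x hx => ⟨subset_closure hx.1, hx.2⟩
  have F_count := setIntegral_comp_mul_abs_det_fderiv_eq_card_mul μ hΩ hΩb
    (fun x hx => (hF x hx).of_le one_le_two) (T := zeros_finite.toFinset)
    (fun x hx => have hx := zeros_finite.mem_toFinset.1 hx
      ⟨hx.1, hx.2, hF_reg x hx.1 hx.2⟩)
    fun x hx hx0 => zeros_finite.mem_toFinset.2 ⟨zero_mem hx hx0, hx0⟩
  have G_count := card_mul_integral_le_setIntegral_comp_mul_abs_det_fderiv μ hΩ hΩb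
    (fun x hx => (hG x hx).of_le one_le_two) hT
  have homotopy := setIntegral_comp_mul_abs_det_fderiv_eq_of_norm_sub_lt μ hΩ hΩb hF hG
    hF_pos hG_pos hlt
  obtain ⟨ε, ε_pos, hεF, hεG, hε⟩ := (F_count.and (G_count.and homotopy)).exists_gt
  let φ : ContDiffBump (0 : E) := ⟨ε / 2, ε, half_pos ε_pos, half_lt_self ε_pos⟩
  have counts := hεG φ φ.continuous (fun _ => φ.nonneg) φ.support_eq.subset
  rw [hε φ φ.contDiff φ.tsupport_eq.subset, hεF φ φ.integrable φ.support_eq.subset] at counts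
  rw [ncard_eq_toFinset_card _ zeros_finite]
  exact_mod_cast le_of_mul_le_mul_right counts φ.integral_pos

end Rouche

section Holomorphic

variable {E : Type*} [NormedAddCommGroup E] [NormedSpace ℂ E]

theorem det_fderiv_real_eq_normSq {f : E → E} {x : E} (hf : DifferentiableAt ℂ f x) :
    (fderiv ℝ f x).det = Complex.normSq (fderiv ℂ f x).det := by
  rw [hf.fderiv_restrictScalars ℝ, ← Algebra.norm_complex_apply]
  exact LinearMap.det_restrictScalars

theorem bijective_iff_det_ne_zero {𝕜 : Type*} [NontriviallyNormedField 𝕜] {V : Type*}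
    [NormedAddCommGroup V] [NormedSpace 𝕜 V] [FiniteDimensional 𝕜 V] {L : V →L[𝕜] V} :
    Function.Bijective L ↔ L.det ≠ 0 := by
  rw [ContinuousLinearMap.det, ← isUnit_iff_ne_zero,
    ← LinearMap.isUnit_iff_isUnit_det (L : V →ₗ[𝕜] V)]
  exact (Module.End.isUnit_iff _).symm

variable [FiniteDimensional ℂ E]

theorem card_le_ncard_zeros_of_analyticOnNhd {Ω : Set E} (hΩ : IsOpen Ω)
    (hΩb : Bornology.IsBounded Ω) {F G : E → E} (hF : AnalyticOnNhd ℂ F (closure Ω))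
    (hG : AnalyticOnNhd ℂ G (closure Ω))
    (hF_reg : ∀ x ∈ Ω, F x = 0 → Function.Bijective (fderiv ℂ F x))
    (hlt : ∀ x ∈ frontier Ω, ‖F x - G x‖ < ‖F x‖) {T : Finset E}
    (hT : ∀ x ∈ T, x ∈ Ω ∧ G x = 0 ∧ Function.Bijective (fderiv ℂ G x)) :
    T.card ≤ {x ∈ Ω | F x = 0}.ncard := by
  have det_eq {H : E → E} (hH : AnalyticOnNhd ℂ H (closure Ω)) {x : E} (hx : x ∈ Ω) :
      (fderiv ℝ H x).det = Complex.normSq (fderiv ℂ H x).det :=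
    det_fderiv_real_eq_normSq (hH x (subset_closure hx)).differentiableAt
  have nonneg {H : E → E} (hH : AnalyticOnNhd ℂ H (closure Ω)) (x : E) (hx : x ∈ Ω) :
      0 ≤ (fderiv ℝ H x).det := det_eq hH hx ▸ Complex.normSq_nonneg _
  have ne_zero {H : E → E} (hH : AnalyticOnNhd ℂ H (closure Ω)) {x : E} (hx : x ∈ Ω)
      (hreg : Function.Bijective (fderiv ℂ H x)) : (fderiv ℝ H x).det ≠ 0 := by
    rw [det_eq hH hx, Ne, Complex.normSq_eq_zero]
    exact bijective_iff_det_ne_zero.1 hreg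
  have smooth {H : E → E} (hH : AnalyticOnNhd ℂ H (closure Ω)) (x : E) (hx : x ∈ closure Ω) :
      ContDiffAt ℝ 2 H x := (hH x hx).contDiffAt.restrict_scalars ℝ
  exact card_le_ncard_zeros_of_norm_sub_lt hΩ hΩb (smooth hF) (smooth hG) (nonneg hF) (nonneg hG)
    (fun x hx hx0 => ne_zero hF hx (hF_reg x hx hx0)) hlt
    fun x hx => ⟨(hT x hx).1, (hT x hx).2.1, ne_zero hG (hT x hx).1 (hT x hx).2.2⟩

end Holomorphic

section ZeroOrder

theorem IsRegularValueOn.mono {f : Cn n → Cn n} {s t : Set (Cn n)} {q : Cn n}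
    (h : IsRegularValueOn f t q) (hst : s ⊆ t) : IsRegularValueOn f s q :=
  fun x hx => h x (hst hx)

/-- **Sard's theorem** in the equidimensional case. -/
theorem dense_setOf_isRegularValueOn {f : Cn n → Cn n} {s : Set (Cn n)}
    (hf : ∀ x ∈ s, DifferentiableAt ℂ f x) : Dense {q | IsRegularValueOn f s q} := by
  let C := {x ∈ s | (fderiv ℝ f x).det = 0}
  have null : MeasureTheory.volume (f '' C) = 0 :=
    MeasureTheory.addHaar_image_eq_zero_of_det_fderivWithin_eq_zero _
      (fun x hx => ((hf x hx.1).restrictScalars ℝ).hasFDerivAt.hasFDerivWithinAt) fun x hx => hx.2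
  refine (interior_eq_empty_iff_dense_compl.1
    (MeasureTheory.Measure.interior_eq_empty_of_null null)).mono fun q hq x hx hxq => ?_
  refine bijective_iff_det_ne_zero.2 fun hdet => hq ⟨x, ⟨hx, ?_⟩, hxq⟩
  rw [det_fderiv_real_eq_normSq (hf x hx), hdet, map_zero]

theorem eventually_finite_fiber {f : Cn n → Cn n} {Ω : Set (Cn n)} (hΩ : IsOpen Ω)
    (hΩb : Bornology.IsBounded Ω) (hf : AnalyticOnNhd ℂ f (closure Ω))
    (h0 : ∀ x ∈ frontier Ω, f x ≠ 0) :
    ∀ᶠ q in 𝓝 0, IsRegularValueOn f Ω q → {x ∈ Ω | f x = q}.Finite := by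
  have compact : IsCompact (f '' frontier Ω) :=
    (isCompact_frontier_of_isBounded hΩb).image_of_continuousOn
      (hf.continuousOn.mono frontier_subset_closure)
  filter_upwards [compact.isClosed.isOpen_compl.eventually_mem
    (show (0 : Cn n) ∉ f '' frontier Ω by simpa using h0)] with q hq hreg
  refine (finite_fiber_of_det_fderiv_ne_zero hΩb.isCompact_closure
    (fun x hx => (hf x hx).contDiffAt.restrict_scalars ℝ) fun x hx hxq => ?_).subset
      fun x hx => ⟨subset_closure hx.1, hx.2⟩
  have hxΩ : x ∈ Ω := by
    by_contra hxΩ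
    exact hq ⟨x, ⟨hx, hΩ.interior_eq.symm ▸ hxΩ⟩, hxq⟩
  rw [det_fderiv_real_eq_normSq (hf x hx).differentiableAt, Ne, Complex.normSq_eq_zero]
  exact bijective_iff_det_ne_zero.1 (hreg x hxΩ hxq)

theorem exists_card_le_ncard_fiber {f : Cn n → Cn n} {Ω : Set (Cn n)} (hΩ : IsOpen Ω)
    (hΩb : Bornology.IsBounded Ω) (hf : AnalyticOnNhd ℂ f (closure Ω))
    (h0 : ∀ x ∈ frontier Ω, f x ≠ 0) :
    ∃ c > 0, ∀ q, ‖q‖ < c → IsRegularValueOn f Ω q → ∀ g, AnalyticOnNhd ℂ g (closure Ω) →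
      (∀ x ∈ frontier Ω, ‖f x - g x‖ < c) → ∀ T : Finset (Cn n),
        (∀ x ∈ T, x ∈ Ω ∧ g x = 0 ∧ Function.Bijective (fderiv ℂ g x)) →
          T.card ≤ {x ∈ Ω | f x = q}.ncard := by
  obtain ⟨ε, ε_pos, hε⟩ := (eventually_add_lt_of_isCompact (isCompact_frontier_of_isBounded hΩb)
    continuousOn_const (hf.continuousOn.mono frontier_subset_closure).norm fun x hx =>
      norm_pos_iff.2 (h0 x hx)).exists_gt
  refine ⟨ε / 3, by positivity, fun q hq hreg g hg hfg T hT => ?_⟩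
  have hFd (x : Cn n) : fderiv ℂ (fun y => f y - q) x = fderiv ℂ f x := fderiv_sub_const q
  simp only [← sub_eq_zero (b := q)]
  refine card_le_ncard_zeros_of_analyticOnNhd hΩ hΩb (fun x hx => (hf x hx).sub analyticAt_const)
    hg (fun x hx hxq => hFd x ▸ hreg x hx (sub_eq_zero.1 hxq)) (fun x hx => ?_) hT
  have close : ‖f x - q - g x‖ ≤ ‖f x - g x‖ + ‖q‖ := by
    rw [sub_right_comm]
    exact norm_sub_le _ _
  change ‖f x - q - g x‖ < ‖f x - q‖
  linarith [hε x hx, hfg x hx, norm_sub_norm_le (f x) q]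

theorem exists_ncard_fiber_eq {f : Cn n → Cn n} {Ω : Set (Cn n)} (hΩ : IsOpen Ω)
    (hΩb : Bornology.IsBounded Ω) (hf : AnalyticOnNhd ℂ f (closure Ω))
    (h0 : ∀ x ∈ frontier Ω, f x ≠ 0) :
    ∃ δ > 0, ∀ q₁ q₂, ‖q₁‖ < δ → ‖q₂‖ < δ → IsRegularValueOn f Ω q₁ → IsRegularValueOn f Ω q₂ →
      {x ∈ Ω | f x = q₁}.ncard = {x ∈ Ω | f x = q₂}.ncard := by
  obtain ⟨c, c_pos, hc⟩ := exists_card_le_ncard_fiber hΩ hΩb hf h0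
  obtain ⟨d, d_pos, hd⟩ := Metric.eventually_nhds_iff.1 (eventually_finite_fiber hΩ hΩb hf h0)
  simp only [dist_zero_right] at hd
  have hfd (q x : Cn n) : fderiv ℂ (fun y => f y - q) x = fderiv ℂ f x := fderiv_sub_const q
  have le {q₁ q₂ : Cn n} (h₁ : ‖q₁‖ < min c d) (h₂ : ‖q₂‖ < min c d)
      (hreg₁ : IsRegularValueOn f Ω q₁) (hreg₂ : IsRegularValueOn f Ω q₂) :
      {x ∈ Ω | f x = q₁}.ncard ≤ {x ∈ Ω | f x = q₂}.ncard := by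
    have fin := hd (h₁.trans_le (min_le_right c d)) hreg₁
    rw [ncard_eq_toFinset_card _ fin]
    refine hc q₂ (h₂.trans_le (min_le_left c d)) hreg₂ (fun x => f x - q₁)
      (fun x hx => (hf x hx).sub analyticAt_const) (fun x _ => ?_) _ fun x hx => ?_
    · rw [sub_sub_cancel]
      exact h₁.trans_le (min_le_left c d)
    · obtain ⟨hxΩ, hxq⟩ := fin.mem_toFinset.1 hx
      exact ⟨hxΩ, sub_eq_zero.2 hxq, hfd q₁ x ▸ hreg₁ x hxΩ hxq⟩
  exact ⟨min c d, lt_min c_pos d_pos, fun q₁ q₂ h₁ h₂ hreg₁ hreg₂ =>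
    (le h₁ h₂ hreg₁ hreg₂).antisymm (le h₂ h₁ hreg₂ hreg₁)⟩

theorem eventually_isolating_closedBall {f : Cn n → Cn n} {p : Cn n} (hf : AnalyticAt ℂ f p)
    (hiso : ∀ᶠ x in 𝓝[≠] p, f x ≠ 0) :
    ∀ᶠ r in 𝓝 (0 : ℝ), AnalyticOnNhd ℂ f (closedBall p r) ∧
      ∀ x ∈ closedBall p r, f x = 0 → x = p := by
  filter_upwards [eventually_closedBall_subset hf.eventually_analyticAt,
    eventually_closedBall_subset (eventually_nhdsWithin_iff.1 hiso)] with r hr hr'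
  exact ⟨fun x hx => hr hx, fun x hx hx0 => by_contra fun hxp => hr' hx hxp hx0⟩

theorem ne_zero_of_mem_frontier_ball {f : Cn n → Cn n} {p : Cn n} {r : ℝ} (hr : r ≠ 0)
    (h : ∀ x ∈ closedBall p r, f x = 0 → x = p) (x : Cn n) (hx : x ∈ frontier (ball p r)) :
    f x ≠ 0 := fun hx0 => by
  have hx : x ∈ sphere p r := frontier_ball_subset_sphere hx
  rw [h x (sphere_subset_closedBall hx) hx0, mem_sphere, dist_self] at hx
  exact hr hx.symm

theorem hasZeroOrder_zeroOrder {f : Cn n → Cn n} {p : Cn n} (hf : AnalyticAt ℂ f p) (hp : f p = 0)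
    (hiso : ∀ᶠ x in 𝓝[≠] p, f x ≠ 0) : HasZeroOrder f p (zeroOrder f p) := by
  obtain ⟨r, hr, han, hzero⟩ := (eventually_isolating_closedBall hf hiso).exists_gt
  have regular (ε : ℝ) (hε : 0 < ε) : ∃ q, ‖q‖ < ε ∧ IsRegularValueOn f (ball p r) q := by
    obtain ⟨q, hq, hqε⟩ := (dense_setOf_isRegularValueOn fun x hx =>
      (han x (ball_subset_closedBall hx)).differentiableAt).exists_dist_lt 0 hε
    exact ⟨q, by rwa [dist_comm, dist_zero_right] at hqε, hq⟩
  obtain ⟨δ, hδ, hcount⟩ := exists_ncard_fiber_eq isOpen_ball isBounded_ball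
    (closure_ball p hr.ne' ▸ han) (ne_zero_of_mem_frontier_ball hr.ne' hzero)
  obtain ⟨q₀, hq₀, hreg₀⟩ := regular δ hδ
  have order : HasZeroOrder f p {x ∈ ball p r | f x = q₀}.ncard :=
    ⟨r, hr, han, hp, hzero, regular, δ, hδ, fun q hq hreg => hcount q q₀ hq hq₀ hreg hreg₀⟩
  exact Nat.sInf_mem (s := {m | HasZeroOrder f p m}) ⟨_, order⟩

theorem le_zeroOrder {f : Cn n → Cn n} {p : Cn n} (hf : AnalyticAt ℂ f p) (hp : f p = 0)
    (hiso : ∀ᶠ x in 𝓝[≠] p, f x ≠ 0) {k : ℕ}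
    (hk : ∀ᶠ r in 𝓝[>] (0 : ℝ), ∀ᶠ q in 𝓝 0,
      IsRegularValueOn f (ball p r) q → k ≤ {x ∈ ball p r | f x = q}.ncard) :
    k ≤ zeroOrder f p := by
  obtain ⟨r, hr, han, -, hzero, regular, δ, hδ, hcount⟩ := hasZeroOrder_zeroOrder hf hp hiso
  obtain ⟨r', hr'k, hr'⟩ := (hk.and (Ioo_mem_nhdsGT hr)).exists
  have finite := eventually_finite_fiber isOpen_ball isBounded_ball
    (closure_ball p hr.ne' ▸ han) (ne_zero_of_mem_frontier_ball hr.ne' hzero)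
  obtain ⟨ε, hε, hgood⟩ := Metric.eventually_nhds_iff.1 (hr'k.and finite)
  obtain ⟨q, hq, hreg⟩ := regular (min δ ε) (lt_min hδ hε)
  obtain ⟨hle, hfin⟩ := hgood ((dist_zero_right q).trans_lt (hq.trans_le (min_le_right δ ε)))
  rw [← hcount q (hq.trans_le (min_le_left δ ε)) hreg]
  have sub : ball p r' ⊆ ball p r := ball_subset_ball hr'.2.le
  exact (hle (hreg.mono sub)).trans
    (ncard_le_ncard (fun x hx => ⟨sub hx.1, hx.2⟩) (hfin hreg))

end ZeroOrder

section Perturbation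

open scoped Matrix

variable {𝕜 : Type*} [NontriviallyNormedField 𝕜] {E : Type*} [NormedAddCommGroup E]
  [NormedSpace 𝕜 E] {ι κ : Type*} [Fintype κ]

theorem analyticAt_mulVec [Fintype ι] {M : E → Matrix ι κ 𝕜} {u : E → κ → 𝕜} {x : E}
    (hM : ∀ i j, AnalyticAt 𝕜 (fun y => M y i j) x) (hu : ∀ j, AnalyticAt 𝕜 (fun y => u y j) x) :
    AnalyticAt 𝕜 (fun y => M y *ᵥ u y) x :=
  AnalyticAt.pi fun i => Finset.univ.analyticAt_fun_sum fun j _ => (hM i j).mul (hu j)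

theorem fderiv_mulVec_of_eq_zero {M : E → Matrix ι κ 𝕜} {u : E → κ → 𝕜} {x : E}
    (hM : ∀ i j, DifferentiableAt 𝕜 (fun y => M y i j) x) (hu : DifferentiableAt 𝕜 u x)
    (hx : u x = 0) (v : E) :
    fderiv 𝕜 (fun y => M y *ᵥ u y) x v = M x *ᵥ fderiv 𝕜 u x v := by
  have hu' := hasFDerivAt_pi'.1 hu.hasFDerivAt
  have h : HasFDerivAt (fun y => M y *ᵥ u y) (ContinuousLinearMap.pi fun i => ∑ j, (M x i j •
      (ContinuousLinearMap.proj j).comp (fderiv 𝕜 u x) +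
        u x j • fderiv 𝕜 (fun y => M y i j) x)) x :=
    hasFDerivAt_pi.2 fun i => HasFDerivAt.fun_sum fun j _ => (hM i j).hasFDerivAt.mul (hu' j)
  ext i
  simp [h.fderiv, hx, Matrix.mulVec, dotProduct]

theorem bijective_fderiv_mulVec_of_eq_zero [DecidableEq κ] {M : E → Matrix κ κ 𝕜} {u : E → κ → 𝕜}
    {x : E} (hM : ∀ i j, DifferentiableAt 𝕜 (fun y => M y i j) x) (hu : DifferentiableAt 𝕜 u x)
    (hx : u x = 0) (hdet : IsUnit (M x).det) (hbij : Function.Bijective (fderiv 𝕜 u x)) :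
    Function.Bijective (fderiv 𝕜 (fun y => M y *ᵥ u y) x) := by
  have hMx : IsUnit (M x) := (Matrix.isUnit_iff_isUnit_det _).2 hdet
  have : ⇑(fderiv 𝕜 (fun y => M y *ᵥ u y) x) = (M x).mulVec ∘ fderiv 𝕜 u x :=
    funext (fderiv_mulVec_of_eq_zero hM hu hx)
  rw [this]
  exact Function.Bijective.comp ⟨Matrix.mulVec_injective_iff_isUnit.2 hMx,
    Matrix.mulVec_surjective_iff_isUnit.2 hMx⟩ hbij

theorem bijective_fderiv_pi_pow_sub_const {κ : Type*} [Finite κ] {N : κ → ℕ} {s : 𝕜} {x : κ → 𝕜}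
    (hN : ∀ j, (N j : 𝕜) ≠ 0) (hx : ∀ j, x j ≠ 0) :
    Function.Bijective (fderiv 𝕜 (fun y : κ → 𝕜 => fun j => y j ^ N j - s) x) := by
  have := Fintype.ofFinite κ
  have hj (j : κ) : HasFDerivAt (fun y : κ → 𝕜 => y j) (ContinuousLinearMap.proj (R := 𝕜) j) x :=
    hasFDerivAt_apply j x
  have h := hasFDerivAt_pi.2 fun j => ((hj j).pow (N j)).sub_const s
  rw [h.fderiv]
  exact Function.Bijective.piMap fun j =>
    mulLeft_bijective₀ _ (nsmul_eq_mul (N j) (x j ^ (N j - 1)) ▸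
      mul_ne_zero (hN j) (pow_ne_zero _ (hx j)))

theorem card_toFinset_nthRoots (k : ℕ) {s : ℂ} (hs : s ≠ 0) : (nthRoots k s).toFinset.card = k := by
  obtain rfl | hk := eq_or_ne k 0
  · simp
  have prim := Complex.isPrimitiveRoot_exp k hk
  rw [Multiset.toFinset_card_of_nodup (prim.nthRoots_nodup hs), prim.card_nthRoots,
    if_pos (IsAlgClosed.exists_pow_nat_eq s (Nat.pos_of_ne_zero hk))]

theorem eventually_det_add_smul_one_ne_zero [DecidableEq κ] (M : Matrix κ κ 𝕜) :
    ∀ᶠ a in 𝓝[≠] (0 : 𝕜), (M + a • 1).det ≠ 0 := by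
  have root (a : 𝕜) : (M + a • 1).det = (-M).charpoly.eval a := by
    rw [Matrix.eval_charpoly, sub_neg_eq_add, add_comm, Matrix.scalar_apply,
      ← Matrix.smul_one_eq_diagonal]
  simp only [root]
  exact nhdsNE_le_cofinite 0
    (Polynomial.finite_setOfPred_isRoot (-M).charpoly_monic.ne_zero).eventually_cofinite_notMem

/-- Let `f x = A x *ᵥ (x j ^ N j)_j`. This map is close to `f` when `a` and `s` are small, and for
generic such `a`, `s` the points with `x j ^ N j = s` for all `j` are simple zeros of it. -/
def perturbation (N : Fin n → ℕ) (A : Cn n → Matrix (Fin n) (Fin n) ℂ) (a s : ℂ) (x : Cn n) :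
    Cn n :=
  (A x + a • 1) *ᵥ fun j => x j ^ N j - s

theorem analyticAt_perturbation {N : Fin n → ℕ} {A : Cn n → Matrix (Fin n) (Fin n) ℂ} {x : Cn n}
    (hA : ∀ i j, AnalyticAt ℂ (fun y => A y i j) x) (a s : ℂ) :
    AnalyticAt ℂ (perturbation N A a s) x :=
  analyticAt_mulVec (fun i j => (hA i j).add analyticAt_const) fun j =>
    (((ContinuousLinearMap.proj (R := ℂ) j).analyticAt x).fun_pow (N j)).fun_sub analyticAt_const

theorem bijective_fderiv_perturbation {N : Fin n → ℕ} {A : Cn n → Matrix (Fin n) (Fin n) ℂ}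
    {a s : ℂ} {x : Cn n} (hA : ∀ i j, DifferentiableAt ℂ (fun y => A y i j) x)
    (hN : ∀ j, N j ≠ 0) (hs : s ≠ 0) (hx : ∀ j, x j ^ N j = s) (hdet : (A x + a • 1).det ≠ 0) :
    Function.Bijective (fderiv ℂ (perturbation N A a s) x) := by
  have hu : DifferentiableAt ℂ (fun y : Cn n => fun j => y j ^ N j - s) x := by fun_prop
  refine bijective_fderiv_mulVec_of_eq_zero (fun i j => (hA i j).add_const _) hu
    (funext fun j => sub_eq_zero.2 (hx j)) hdet.isUnit
      (bijective_fderiv_pi_pow_sub_const (fun j => Nat.cast_ne_zero.2 (hN j)) fun j hxj => hs ?_)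
  rw [← hx j, hxj, zero_pow (hN j)]

theorem eventually_norm_sub_perturbation_lt {N : Fin n → ℕ}
    {A : Cn n → Matrix (Fin n) (Fin n) ℂ} {K : Set (Cn n)} (hK : IsCompact K)
    (hA : ∀ x ∈ K, ∀ i j, ContinuousAt (fun y => A y i j) x) {c : ℝ} (hc : 0 < c) :
    ∀ᶠ p : ℂ × ℂ in 𝓝 0, ∀ x ∈ K,
      ‖(A x *ᵥ fun j => x j ^ N j) - perturbation N A p.1 p.2 x‖ < c := by
  refine hK.eventually_forall_of_forall_eventually fun x hx => ?_
  have hAx : ContinuousAt A x := continuousAt_pi.2 fun i => continuousAt_pi.2 (hA x hx i)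
  have : ContinuousAt (fun z : (ℂ × ℂ) × Cn n => A z.2) (0, x) :=
    hAx.comp_of_eq continuousAt_snd rfl
  have cont : ContinuousAt (fun z : (ℂ × ℂ) × Cn n =>
      ‖(A z.2 *ᵥ fun j => z.2 j ^ N j) - perturbation N A z.1.1 z.1.2 z.2‖) (0, x) := by
    unfold perturbation
    fun_prop
  refine cont.eventually_lt continuousAt_const ?_
  simpa [perturbation] using hc

theorem eventually_pow_eq_imp_mem_ball (N : Fin n → ℕ) {ρ : ℝ} (hρ : 0 < ρ) :
    ∀ᶠ s : ℂ in 𝓝 0, ∀ x : Cn n, (∀ j, x j ^ N j = s) → x ∈ ball 0 ρ := by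
  have small : ∀ᶠ s : ℂ in 𝓝 0, ∀ j, ‖s‖ < ρ ^ N j := eventually_all.2 fun j =>
    continuous_norm.continuousAt.eventually_lt continuousAt_const (by simpa using pow_pos hρ (N j))
  filter_upwards [small] with s hs x hx
  refine mem_ball_zero_iff.2 ((pi_norm_lt_iff hρ).2 fun j => ?_)
  refine lt_of_pow_lt_pow_left₀ (N j) hρ.le ?_
  rw [← norm_pow, hx j]
  exact hs j

theorem exists_perturbation_zeros {N : Fin n → ℕ} (hN : ∀ j, N j ≠ 0)
    {A : Cn n → Matrix (Fin n) (Fin n) ℂ} {r c : ℝ} (hr : 0 < r) (hc : 0 < c)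
    (hA : ∀ x ∈ closedBall 0 r, ∀ i j, AnalyticAt ℂ (fun y => A y i j) x) :
    ∃ a s : ℂ, (∀ x ∈ closedBall (0 : Cn n) r,
      ‖(A x *ᵥ fun j => x j ^ N j) - perturbation N A a s x‖ < c) ∧
      ∃ T : Finset (Cn n), T.card = ∏ j, N j ∧ ∀ x ∈ T, x ∈ ball 0 r ∧
        perturbation N A a s x = 0 ∧ Function.Bijective (fderiv ℂ (perturbation N A a s) x) := by
  have close := (eventually_norm_sub_perturbation_lt (N := N) (isCompact_closedBall 0 r)
    (fun x hx i j => (hA x hx i j).continuousAt) hc)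
  rw [Prod.zero_eq_mk, nhds_prod_eq] at close
  obtain ⟨a, ha, hdet⟩ := ((close.curry.filter_mono nhdsWithin_le_nhds).and
    (eventually_det_add_smul_one_ne_zero (A 0))).exists
  have hA0 : ContinuousAt A 0 := continuousAt_pi.2 fun i => continuousAt_pi.2 fun j =>
    (hA 0 (mem_closedBall_self hr.le) i j).continuousAt
  have det_ne : ∀ᶠ x in 𝓝 (0 : Cn n), (A x + a • 1).det ≠ 0 :=
    ContinuousAt.eventually_ne (by fun_prop) hdet
  obtain ⟨ρ, hρ, hdet⟩ := (eventually_ball_subset det_ne).exists_gt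
  obtain ⟨s, ⟨has, hsball⟩, hs⟩ := (((ha.and (eventually_pow_eq_imp_mem_ball N
    (lt_min hρ hr))).filter_mono nhdsWithin_le_nhds).and
      (self_mem_nhdsWithin (s := {0}ᶜ))).exists
  refine ⟨a, s, has, Fintype.piFinset fun j => (nthRoots (N j) s).toFinset, ?_, fun x hx => ?_⟩
  · simp only [Fintype.card_piFinset, card_toFinset_nthRoots _ hs]
  · have hpow (j : Fin n) : x j ^ N j = s := by
      simpa [mem_nthRoots (Nat.pos_of_ne_zero (hN j))] using Fintype.mem_piFinset.1 hx j
    have hxρ := hsball x hpow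
    have hxr : x ∈ ball 0 r := ball_subset_ball (min_le_right ρ r) hxρ
    refine ⟨hxr, ?_, bijective_fderiv_perturbation
      (fun i j => (hA x (ball_subset_closedBall hxr) i j).differentiableAt) hN hs hpow
        (hdet (ball_subset_ball (min_le_left ρ r) hxρ))⟩
    simp only [perturbation, hpow, sub_self]
    exact Matrix.mulVec_zero _

end Perturbation

theorem zeroOrder_corollary_three_general (N : Fin n → ℕ) (f : Cn n → Cn n)
    (A : Cn n → Matrix (Fin n) (Fin n) ℂ) (hA : ∀ i j, AnalyticAt ℂ (fun x => A x i j) 0)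
    (hform : ∀ᶠ x in 𝓝 (0 : Cn n), f x = (A x).mulVec fun j => x j ^ N j)
    (hiso : IsolatedZeroAt0 f) : ∏ j, N j ≤ zeroOrder f 0 := by
  by_cases hN : ∀ j, N j ≠ 0
  swap
  · obtain ⟨j, hj⟩ := not_forall_not.1 hN
    simp [Finset.prod_eq_zero (Finset.mem_univ j) hj]
  have hf : AnalyticAt ℂ f 0 := (analyticAt_perturbation (N := N) hA 0 0).congr
    (hform.mono fun x hx => by simp [perturbation, hx])
  have hA' : ∀ᶠ x in 𝓝 0, ∀ i j, AnalyticAt ℂ (fun y => A y i j) x :=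
    eventually_all.2 fun i => eventually_all.2 fun j => (hA i j).eventually_analyticAt
  refine le_zeroOrder hf hiso.1 hiso.2 ?_
  filter_upwards [nhdsWithin_le_nhds (eventually_isolating_closedBall hf hiso.2),
    nhdsWithin_le_nhds (eventually_closedBall_subset (Filter.Eventually.and hform hA')),
    self_mem_nhdsWithin] with r ⟨han, hzero⟩ hr hr0
  have hcl : closure (ball (0 : Cn n) r) = closedBall 0 r := closure_ball 0 hr0.ne'
  obtain ⟨c, hc, hcard⟩ := exists_card_le_ncard_fiber isOpen_ball isBounded_ball
    (hcl ▸ han) (ne_zero_of_mem_frontier_ball hr0.ne' hzero)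
  obtain ⟨a, s, close, T, hT, hTzero⟩ :=
    exists_perturbation_zeros hN hr0 hc fun x hx => (hr hx).2
  filter_upwards [Metric.ball_mem_nhds 0 hc] with q hq hreg
  rw [← hT]
  refine hcard q (mem_ball_zero_iff.1 hq) hreg _ (fun x hx =>
    analyticAt_perturbation (hr (hcl ▸ hx)).2 a s) (fun x hx => ?_) T hTzero
  have hx : x ∈ closedBall 0 r := hcl ▸ frontier_subset_closure hx
  rw [(hr hx).1]
  exact close x hx

/-- Cronin-type estimate: if `f₁ = x₁^{n₁}·O(1) + x₂^{n₂}·O(1)` and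
`f₂ = x₁^{n₁}·O(1) + x₂^{n₂}·O(1)`, and `0` is an isolated zero of `f`, then
`π_f(0) ≥ n₁ n₂`. -/
theorem zeroOrder_corollary_three (n₁ n₂ : ℕ) (hn₁ : 0 < n₁) (hn₂ : 0 < n₂)
    (f : Cn 2 → Cn 2) (v₁ v₂ w₁ w₂ : Cn 2 → ℂ)
    (hv₁ : AnalyticAt ℂ v₁ 0) (hv₂ : AnalyticAt ℂ v₂ 0)
    (hw₁ : AnalyticAt ℂ w₁ 0) (hw₂ : AnalyticAt ℂ w₂ 0)
    (hform : ∀ᶠ x in 𝓝 (0 : Cn 2),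
      f x = ![x 0 ^ n₁ * v₁ x + x 1 ^ n₂ * w₁ x,
              x 0 ^ n₁ * v₂ x + x 1 ^ n₂ * w₂ x])
    (hiso : IsolatedZeroAt0 f) :
    n₁ * n₂ ≤ zeroOrder f 0 := by
  let A (x : Cn 2) : Matrix (Fin 2) (Fin 2) ℂ := !![v₁ x, w₁ x; v₂ x, w₂ x]
  have hA (i j : Fin 2) : AnalyticAt ℂ (fun x => A x i j) 0 := by
    fin_cases i <;> fin_cases j <;> assumption
  have hfA : ∀ᶠ x in 𝓝 0, f x = (A x).mulVec fun j => x j ^ ![n₁, n₂] j := by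
    filter_upwards [hform] with x hx
    ext i
    fin_cases i <;> simp [hx, A, Matrix.mulVec, dotProduct, mul_comm]
  simpa using zeroOrder_corollary_three_general ![n₁, n₂] f A hA hfA hiso

end ZhangPaper
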